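/- Let p be an odd prime and n ≥ 3, and let i, j, k be pairwise distinct indices with 1 ≤ i, j, k ≤ n. Set P := x_i • (y_j·y_k) − x_j • (y_i·y_k) + x_k • (y_i·y_j) ∈ Λ. Then there exists a ∈ (ℤ/p)^n such that φ_a(P) ≠ P; that is, the inverse transgression map at some group element a of (ℤ/p)^n is nonzero on P, so for n ≥ 3 the inverse transgression map of (ℤ/p)^n is nontrivial. -/

import Mathlib

/-!
Algebraic model of the inverse transgression map for `G = (ℤ/p)^n`.

`R p n = 𝔽_p[x_1, …, x_n]`, `Λ p n` is the exterior algebra over `R p n` on the free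
module `Fin (n+1) → R p n` with standard basis `e_0, …, e_n`; `y p n i = ι e_i`
(modelling `y_{i+1}`) and `z p n = ι e_n`.  `φ p n a` is the algebra map induced by
`e_i ↦ e_i + a_{i+1} e_n` (for `i < n`) and `e_n ↦ 0`.
-/

noncomputable section

open ExteriorAlgebra

abbrev R (p n : ℕ) : Type := MvPolynomial (Fin n) (ZMod p)

abbrev Λ (p n : ℕ) : Type := ExteriorAlgebra (R p n) (Fin (n + 1) → R p n)

/-- The class `y_{i+1}`, i.e. `ι e_i` for `i = 0, …, n-1`. -/
def y (p n : ℕ) (i : Fin n) : Λ p n :=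
  ExteriorAlgebra.ι (R p n) (Pi.single i.castSucc 1)

/-- The extra exterior generator `z = ι e_n`. -/
def z (p n : ℕ) : Λ p n :=
  ExteriorAlgebra.ι (R p n) (Pi.single (Fin.last n) 1)

/-- The linear endomorphism `e_i ↦ e_i + a_{i+1} • e_n` (`i < n`), `e_n ↦ 0`. -/
def f (p n : ℕ) (a : Fin n → ZMod p) :
    (Fin (n + 1) → R p n) →ₗ[R p n] (Fin (n + 1) → R p n) :=
  ∑ i : Fin n,
    LinearMap.smulRight (LinearMap.proj i.castSucc)
      ((Pi.single i.castSucc 1 : Fin (n + 1) → R p n) +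
        algebraMap (ZMod p) (R p n) (a i) • (Pi.single (Fin.last n) 1 : Fin (n + 1) → R p n))

/-- The algebraic inverse-transgression substitution `φ_a`. -/
def φ (p n : ℕ) (a : Fin n → ZMod p) : Λ p n →ₐ[R p n] Λ p n :=
  ExteriorAlgebra.map (f p n a)

/-!
The substitution `φ_a` changes `P` by `τ_a(P) · z`, where
`τ_a(P) = (a_j x_k - a_k x_j) y_i + (a_k x_i - a_i x_k) y_j + (a_i x_j - a_j x_i) y_k`
is the cross product of `(a_i, a_j, a_k)` and `(x_i, x_j, x_k)`. Contracting with the coordinate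
functional dual to `z` shows that multiplication by `z` is injective on the span of the `y`'s, and
the coefficients of `τ_a(P)` are linear forms in distinct variables. So `φ_a` fixes `P` exactly when
`a_i = a_j = a_k = 0`.
-/

open MvPolynomial (C X)

section ExteriorAlgebra

variable {A M : Type*} [CommRing A] [AddCommGroup M] [Module A M]

theorem ι_mul_ι_eq_zero_iff_of_dual (d : Module.Dual A M) {v w : M} (hv : d v = 0)
    (hw : d w = 1) : ι A v * ι A w = 0 ↔ v = 0 := by
  refine ⟨fun h => ?_, fun h => by rw [h, map_zero, zero_mul]⟩
  have contract : CliffordAlgebra.contractLeft d (ι A v * ι A w) = -ι A v := by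
    rw [CliffordAlgebra.contractLeft_ι_mul, CliffordAlgebra.contractLeft_ι, hv, hw, zero_smul,
      map_one, mul_one, zero_sub]
  rwa [h, map_zero, zero_eq_neg, ι_eq_zero_iff] at contract

theorem ι_add_smul_mul_ι_add_smul (u v w : M) (s t : A) :
    ι A (u + s • w) * ι A (v + t • w) = ι A u * ι A v + ι A (t • u - s • v) * ι A w := by
  have swap : ι A w * ι A v = -(ι A v * ι A w) := eq_neg_of_add_eq_zero_left (ι_add_mul_swap w v)
  simp only [map_add, map_sub, map_smul, add_mul, mul_add, sub_mul, smul_mul_assoc,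
    mul_smul_comm, swap, ι_sq_zero, smul_zero, smul_neg]
  module

end ExteriorAlgebra

theorem C_mul_X_sub_C_mul_X_eq_zero_iff {σ A : Type*} [CommRing A] {j k : σ} (hjk : j ≠ k)
    (s t : A) : (C s * X k - C t * X j : MvPolynomial σ A) = 0 ↔ s = 0 ∧ t = 0 := by
  classical
  refine ⟨fun h => ⟨?_, ?_⟩, fun ⟨hs, ht⟩ => by simp [hs, ht]⟩
  · simpa [MvPolynomial.coeff_X, Finsupp.single_left_inj, hjk] using
      congrArg (MvPolynomial.coeff (Finsupp.single k 1)) h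
  · simpa [MvPolynomial.coeff_X, Finsupp.single_left_inj, hjk.symm] using
      congrArg (MvPolynomial.coeff (Finsupp.single j 1)) h

section InverseTransgression

variable (p n : ℕ) (a : Fin n → ZMod p)

theorem f_single_castSucc (i : Fin n) :
    f p n a (Pi.single i.castSucc 1) =
      Pi.single i.castSucc 1 + C (a i) • Pi.single (Fin.last n) 1 := by
  simp [f, LinearMap.sum_apply, Pi.single_apply, MvPolynomial.algebraMap_eq,
    Finset.sum_add_distrib]

theorem φ_y_mul_y (i j : Fin n) :
    φ p n a (y p n i * y p n j) = y p n i * y p n j +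
      ι (R p n) (C (a j) • Pi.single i.castSucc 1 -
        C (a i) • Pi.single j.castSucc 1) * z p n := by
  rw [φ, y, y, map_mul, map_apply_ι, map_apply_ι, f_single_castSucc, f_single_castSucc,
    ι_add_smul_mul_ι_add_smul, z]

variable (i j k : Fin n)

/-- The class `P = x_i y_j y_k - x_j y_i y_k + x_k y_i y_j`, which is the image of `y_i y_j y_k`
under the Koszul differential sending each `y_l` to `x_l`. -/
def koszulClass : Λ p n :=
  (X i : R p n) • (y p n j * y p n k)
    - (X j : R p n) • (y p n i * y p n k)
    + (X k : R p n) • (y p n i * y p n j)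

/-- The inverse transgression `τ_a(P)` of `koszulClass p n i j k`, encoded as the coefficient vector
of this linear form in the exterior generators; its last coordinate, that of `z`, is zero. -/
def koszulTransgression : Fin (n + 1) → R p n :=
  (C (a j) * X k - C (a k) * X j : R p n) • Pi.single i.castSucc 1
    + (C (a k) * X i - C (a i) * X k : R p n) • Pi.single j.castSucc 1
    + (C (a i) * X j - C (a j) * X i : R p n) • Pi.single k.castSucc 1

theorem koszulTransgression_last : koszulTransgression p n a i j k (Fin.last n) = 0 := by
  simp [koszulTransgression]

theorem koszulTransgression_eq_smul_sub :
    koszulTransgression p n a i j k =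
      (X i : R p n) • (C (a k) • Pi.single j.castSucc 1 - C (a j) • Pi.single k.castSucc 1)
        - (X j : R p n) • (C (a k) • Pi.single i.castSucc 1 - C (a i) • Pi.single k.castSucc 1)
        + (X k : R p n) • (C (a j) • Pi.single i.castSucc 1
          - C (a i) • Pi.single j.castSucc 1) := by
  unfold koszulTransgression
  module

theorem φ_koszulClass :
    φ p n a (koszulClass p n i j k) =
      koszulClass p n i j k + ι (R p n) (koszulTransgression p n a i j k) * z p n := by
  rw [koszulTransgression_eq_smul_sub]
  simp only [koszulClass, map_add, map_sub, map_smul, φ_y_mul_y, smul_add, add_mul, sub_mul,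
    smul_mul_assoc]
  module

variable {i j k}

theorem koszulTransgression_eq_zero_iff (hij : i ≠ j) (hik : i ≠ k) (hjk : j ≠ k) :
    koszulTransgression p n a i j k = 0 ↔ a i = 0 ∧ a j = 0 ∧ a k = 0 := by
  refine ⟨fun h => ?_, fun ⟨hi, hj, hk⟩ => by simp [koszulTransgression, hi, hj, hk]⟩
  have coord_i : koszulTransgression p n a i j k i.castSucc =
      C (a j) * X k - C (a k) * X j := by
    simp [koszulTransgression, hij, hik]
  have coord_j : koszulTransgression p n a i j k j.castSucc =
      C (a k) * X i - C (a i) * X k := by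
    simp [koszulTransgression, hij.symm, hjk]
  rw [h, Pi.zero_apply, eq_comm] at coord_i coord_j
  obtain ⟨hj, hk⟩ := (C_mul_X_sub_C_mul_X_eq_zero_iff hjk _ _).mp coord_i
  obtain ⟨-, hi⟩ := (C_mul_X_sub_C_mul_X_eq_zero_iff hik.symm _ _).mp coord_j
  exact ⟨hi, hj, hk⟩

theorem statement4_general (hij : i ≠ j) (hik : i ≠ k) (hjk : j ≠ k) :
    φ p n a (koszulClass p n i j k) = koszulClass p n i j k ↔ a i = 0 ∧ a j = 0 ∧ a k = 0 := by
  rw [φ_koszulClass, add_eq_left, z,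
    ι_mul_ι_eq_zero_iff_of_dual (LinearMap.proj (Fin.last n))
      (koszulTransgression_last p n a i j k) (Pi.single_eq_same _ _),
    koszulTransgression_eq_zero_iff p n a hij hik hjk]

end InverseTransgression

/-- For `n ≥ 3` and pairwise distinct indices `i, j, k`, the class
`P = x_i y_j y_k - x_j y_i y_k + x_k y_i y_j` has nontrivial inverse transgression:
there is some `a ∈ (ℤ/p)^n` with `φ_a P ≠ P`. -/
theorem statement4 (p : ℕ) (hp : p.Prime) (hodd : Odd p) (n : ℕ) (hn : 3 ≤ n)
    (i j k : Fin n) (hij : i ≠ j) (hik : i ≠ k) (hjk : j ≠ k) :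
    ∃ a : Fin n → ZMod p,
      φ p n a ((MvPolynomial.X i : R p n) • (y p n j * y p n k)
          - (MvPolynomial.X j : R p n) • (y p n i * y p n k)
          + (MvPolynomial.X k : R p n) • (y p n i * y p n j)) ≠
        (MvPolynomial.X i : R p n) • (y p n j * y p n k)
          - (MvPolynomial.X j : R p n) • (y p n i * y p n k)
          + (MvPolynomial.X k : R p n) • (y p n i * y p n j) := by
  have : Fact p.Prime := ⟨hp⟩
  exact ⟨1, fun h => one_ne_zero ((statement4_general p n 1 hij hik hjk).mp h).1⟩

end
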